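/- For every real ρ with −2 < ρ < −2/3, setting η := ξ̃(5/8, η̄(8/3, ρ)), one has ξ̃(5/8, η̄(8/3, −4/3 − ρ)) = η + 6 − √(1+24η). This identifies the exponent of a two-sided restriction measure of exponent η conditioned to have no cut point as η' = η + δ(η) with δ(η) = 6 − √(1+24η). -/

import Mathlib

/-- `ξ̃(u,α) = ((√(24u+1) + √(24α+1) − 1)² − 1)/24` -/
noncomputable def xiTilde (u α : ℝ) : ℝ :=
  ((Real.sqrt (24 * u + 1) + Real.sqrt (24 * α + 1) - 1) ^ 2 - 1) / 24

/-- `η̄(κ,ρ) = (ρ+2)(ρ+6−κ)/(4κ)` -/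
noncomputable def etaBar (κ ρ : ℝ) : ℝ := (ρ + 2) * (ρ + 6 - κ) / (4 * κ)

/-!
The substitution `x ↦ √(24 x + 1)` linearises everything: it turns `xiTilde` into addition (up to
the shift by `-1`), and `etaBar (8 / 3)` into the affine map `ρ ↦ (3 ρ + 8) / 2`. In this coordinate
the duality `ρ ↦ -4 / 3 - ρ` becomes the reflection `a ↦ 6 - a`, and hence on
`w = √(1 + 24 η)` the reflection `w ↦ 12 - w`; finally
`((12 - w) ^ 2 - 1) / 24 = (w ^ 2 - 1) / 24 + 6 - w`.
-/

theorem one_add_mul_xiTilde (u α : ℝ) :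
    1 + 24 * xiTilde u α = (√(24 * u + 1) + √(24 * α + 1) - 1) ^ 2 := by
  unfold xiTilde
  ring

theorem sqrt_one_add_mul_xiTilde {u α : ℝ} (h : 1 ≤ √(24 * u + 1) + √(24 * α + 1)) :
    √(1 + 24 * xiTilde u α) = √(24 * u + 1) + √(24 * α + 1) - 1 := by
  rw [one_add_mul_xiTilde, Real.sqrt_sq (sub_nonneg.mpr h)]

/- The hypothesis `hc` says that `√(1 + 24 * xiTilde u α)` and `√(1 + 24 * xiTilde u β)` are
symmetric about `c`. -/
theorem xiTilde_eq_of_sqrt_add_sqrt_eq {u α β c : ℝ} (hα : 1 ≤ √(24 * u + 1) + √(24 * α + 1))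
    (hc : √(24 * α + 1) + √(24 * β + 1) = 2 * (c + 1 - √(24 * u + 1))) :
    xiTilde u β = xiTilde u α + c ^ 2 / 6 - c / 6 * √(1 + 24 * xiTilde u α) := by
  have sq_sqrt_α : √(1 + 24 * xiTilde u α) ^ 2 = 1 + 24 * xiTilde u α := by
    rw [sqrt_one_add_mul_xiTilde hα, one_add_mul_xiTilde]
  have reflect : 1 + 24 * xiTilde u β = (2 * c - √(1 + 24 * xiTilde u α)) ^ 2 := by
    rw [one_add_mul_xiTilde, sqrt_one_add_mul_xiTilde hα]
    congr 1
    linear_combination hc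
  linear_combination (reflect + sq_sqrt_α) / 24

/- `κ = 8 / 3` is one of the two values (with `κ = 6`) for which `24 * etaBar κ ρ + 1` is a perfect
square in `ρ`. -/
theorem sqrt_etaBar_eight_thirds {ρ : ℝ} (hρ : -8 / 3 ≤ ρ) :
    √(24 * etaBar (8 / 3) ρ + 1) = (3 * ρ + 8) / 2 := by
  have perfect_square : 24 * etaBar (8 / 3) ρ + 1 = ((3 * ρ + 8) / 2) ^ 2 := by
    unfold etaBar
    ring
  rw [perfect_square, Real.sqrt_sq (by linarith)]

theorem sqrt_etaBar_add_sqrt_etaBar_dual {ρ : ℝ} (h₁ : -8 / 3 ≤ ρ) (h₂ : ρ ≤ 4 / 3) :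
    √(24 * etaBar (8 / 3) ρ + 1) + √(24 * etaBar (8 / 3) (-4 / 3 - ρ) + 1) = 6 := by
  rw [sqrt_etaBar_eight_thirds h₁, sqrt_etaBar_eight_thirds (by linarith)]
  ring

theorem stmt_15_general {ρ : ℝ} (h₁ : -8 / 3 ≤ ρ) (h₂ : ρ ≤ 4 / 3) :
    xiTilde (5 / 8) (etaBar (8 / 3) (-4 / 3 - ρ)) =
      xiTilde (5 / 8) (etaBar (8 / 3) ρ) + 6 -
        √(1 + 24 * xiTilde (5 / 8) (etaBar (8 / 3) ρ)) := by
  have sqrt_u : √(24 * (5 / 8) + 1) = 4 := by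
    rw [Real.sqrt_eq_iff_mul_self_eq_of_pos] <;> norm_num
  have one_le : 1 ≤ √(24 * (5 / 8) + 1) + √(24 * etaBar (8 / 3) ρ + 1) := by
    rw [sqrt_u]
    linarith [Real.sqrt_nonneg (24 * etaBar (8 / 3) ρ + 1)]
  have symmetric_about_six :
      √(24 * etaBar (8 / 3) ρ + 1) + √(24 * etaBar (8 / 3) (-4 / 3 - ρ) + 1) =
        2 * (6 + 1 - √(24 * (5 / 8) + 1)) := by
    rw [sqrt_etaBar_add_sqrt_etaBar_dual h₁ h₂, sqrt_u]
    norm_num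
  rw [xiTilde_eq_of_sqrt_add_sqrt_eq one_le symmetric_about_six]
  ring

theorem stmt_15 (ρ : ℝ) (h1 : -2 < ρ) (h2 : ρ < -2 / 3) :
    xiTilde (5 / 8) (etaBar (8 / 3) (-4 / 3 - ρ)) =
      xiTilde (5 / 8) (etaBar (8 / 3) ρ) + 6 -
        Real.sqrt (1 + 24 * xiTilde (5 / 8) (etaBar (8 / 3) ρ)) :=
  stmt_15_general (by linarith) (by linarith)
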